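/- A trace-free Codazzi tensor on the round unit sphere S^n(1) (n ≥ 2) vanishes identically. Consequently, for an infinitesimal isometric deformation k of S^n(1) ⊂ R^{n+1} with k^T = 0 on the sphere, the linearized second fundamental form A'_k, which is a trace-free Codazzi tensor, must vanish. -/

import Mathlib

open scoped RealInnerProductSpace

noncomputable section

variable {n : ℕ}

/-- Orthogonal projection onto the tangent space of the unit sphere at p (for ‖p‖ = 1). -/
def tanProj (p v : EuclideanSpace ℝ (Fin (n+1))) : EuclideanSpace ℝ (Fin (n+1)) :=
  v - (⟪v, p⟫) • p

/-- The covariant derivative (∇_X T)(Y,Z) at p ∈ S^n(1) of a 2-tensor T on the sphere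
(given as an ambient bilinear-form-valued map), for tangent vectors X, Y, Z at p:
the Levi–Civita connection of the round sphere is the tangential projection of the
Euclidean derivative, and Ỹ(x) = tanProj x Y, Z̃(x) = tanProj x Z are tangent extensions
of Y, Z. -/
def covDerivT (T : EuclideanSpace ℝ (Fin (n+1)) →
      EuclideanSpace ℝ (Fin (n+1)) →L[ℝ] EuclideanSpace ℝ (Fin (n+1)) →L[ℝ] ℝ)
    (p X Y Z : EuclideanSpace ℝ (Fin (n+1))) : ℝ :=
  fderiv ℝ (fun x => T x (tanProj x Y) (tanProj x Z)) p X
    - T p (tanProj p (fderiv ℝ (fun x => tanProj x Y) p X)) Z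
    - T p Y (tanProj p (fderiv ℝ (fun x => tanProj x Z) p X))

/-- A trace-free Codazzi tensor on the round unit sphere S^n(1) ⊂ ℝ^{n+1}: a C¹
symmetric 2-tensor field on the sphere (represented by tangential ambient bilinear
forms) satisfying the Codazzi equation (∇_X T)(Y,Z) = (∇_Y T)(X,Z) and tr_γ T = 0. -/
structure IsTraceFreeCodazziSphere
    (T : EuclideanSpace ℝ (Fin (n+1)) →
      EuclideanSpace ℝ (Fin (n+1)) →L[ℝ] EuclideanSpace ℝ (Fin (n+1)) →L[ℝ] ℝ) : Prop where
  diff : Differentiable ℝ T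
  symm : ∀ p x y, T p x y = T p y x
  tangential : ∀ p ∈ Metric.sphere (0 : EuclideanSpace ℝ (Fin (n+1))) 1, ∀ x, T p p x = 0
  codazzi : ∀ p ∈ Metric.sphere (0 : EuclideanSpace ℝ (Fin (n+1))) 1, ∀ X Y Z,
    ⟪X, p⟫ = 0 → ⟪Y, p⟫ = 0 → ⟪Z, p⟫ = 0 →
      covDerivT T p X Y Z = covDerivT T p Y X Z
  traceFree : ∀ p ∈ Metric.sphere (0 : EuclideanSpace ℝ (Fin (n+1))) 1,
    ∑ i, T p (EuclideanSpace.single i (1:ℝ)) (EuclideanSpace.single i (1:ℝ)) = 0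

end

section potential
variable {E F : Type*} [NormedAddCommGroup E] [InnerProductSpace ℝ E]
  [NormedAddCommGroup F] [NormedSpace ℝ F] [CompleteSpace F]

lemma cdz_slit (ω : E → E →L[ℝ] F) (hd : ∀ x, x ≠ 0 → DifferentiableAt ℝ ω x)
    (hs : ∀ x, x ≠ 0 → ∀ a b, fderiv ℝ ω x a b = fderiv ℝ ω x b a) (e : E) (he : ‖e‖ = 1) :
    ∃ u : E → F, ∀ x, 0 < ‖x‖ + ⟪x, e⟫ → HasFDerivAt u (ω x) x := by
  have hop : ∀ v : E, IsOpen {x : E | 0 < ⟪v, x⟫} := fun v =>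
    isOpen_lt continuous_const (by fun_prop)
  have hcv : ∀ v : E, Convex ℝ {x : E | 0 < ⟪v, x⟫} := by
    intro v
    exact (convex_halfSpace_gt (𝕜 := ℝ) (f := fun x : E => ⟪v, x⟫)
      ⟨fun a b => inner_add_right _ _ _, fun c a => by simp [inner_smul_right]⟩ 0)
  have hF : ∀ v : E, ∃ f : E → F, ∀ x ∈ {x : E | 0 < ⟪v, x⟫}, HasFDerivAt f (ω x) x := by
    intro v
    have hne : ∀ x ∈ {x : E | 0 < ⟪v, x⟫}, x ≠ 0 := by
      rintro x hx rfl
      simp at hx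
    exact (hcv v).exists_forall_hasFDerivAt_of_fderiv_symmetric (hop v)
      (fun x hx => (hd x (hne x hx)).differentiableWithinAt) (fun x hx => hs x (hne x hx))
  choose f hf using hF
  have h1 : ∀ x : E, 0 < ‖x‖ + ⟪x, e⟫ → 0 < ⟪‖x‖ • e + x, e⟫ := by
    intro x hx
    rw [inner_add_left, inner_smul_left, real_inner_self_eq_norm_sq, he]
    simpa using hx
  have h2 : ∀ x : E, 0 < ‖x‖ + ⟪x, e⟫ → 0 < ⟪‖x‖ • e + x, x⟫ := by
    intro x hx
    have hx0 : 0 < ‖x‖ := by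
      rw [norm_pos_iff]
      rintro rfl
      simp at hx
    rw [inner_add_left, inner_smul_left, real_inner_self_eq_norm_sq, real_inner_comm]
    have := mul_pos hx0 hx
    simp only [conj_trivial]
    nlinarith
  refine ⟨fun x => f (‖x‖ • e + x) x - f (‖x‖ • e + x) e, fun x hx => ?_⟩
  have hev : (fun y => f (‖y‖ • e + y) y - f (‖y‖ • e + y) e) =ᶠ[nhds x]
      fun y => f (‖x‖ • e + x) y - f (‖x‖ • e + x) e := by
    have o1 : {y : E | 0 < ‖y‖ + ⟪y, e⟫} ∈ nhds x :=
      (isOpen_lt continuous_const (by fun_prop)).mem_nhds hx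
    have o2 : {y : E | 0 < ⟪‖x‖ • e + x, y⟫} ∈ nhds x := (hop _).mem_nhds (h2 x hx)
    filter_upwards [o1, o2] with y hy1 hy2
    have hx1 := h1 x hx
    have hy3 := h1 y hy1
    have hy4 := h2 y hy1
    set v := ‖x‖ • e + x
    set w := ‖y‖ • e + y
    have hO : IsOpen ({x : E | 0 < ⟪v, x⟫} ∩ {x : E | 0 < ⟪w, x⟫}) := (hop v).inter (hop w)
    have hC : Convex ℝ ({x : E | 0 < ⟪v, x⟫} ∩ {x : E | 0 < ⟪w, x⟫}) := (hcv v).inter (hcv w)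
    obtain ⟨a, ha⟩ := hO.exists_eq_add_of_fderiv_eq (𝕜 := ℝ) (f := f v) (g := f w)
      hC.isPreconnected
      (fun z hz => (hf v z hz.1).differentiableAt.differentiableWithinAt)
      (fun z hz => (hf w z hz.2).differentiableAt.differentiableWithinAt)
      (fun z hz => by rw [(hf v z hz.1).fderiv, (hf w z hz.2).fderiv])
    have e1 : f v e = f w e + a := ha ⟨hx1, hy3⟩
    have e2 : f v y = f w y + a := ha ⟨hy2, hy4⟩
    rw [e1, e2]; abel
  exact ((hf _ x (h2 x hx)).sub_const _).congr_of_eventuallyEq hev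

lemma cdz_potential [FiniteDimensional ℝ E] (hdim : 2 < Module.finrank ℝ E)
    (ω : E → E →L[ℝ] F) (hd : ∀ x, x ≠ 0 → DifferentiableAt ℝ ω x)
    (hs : ∀ x, x ≠ 0 → ∀ a b, fderiv ℝ ω x a b = fderiv ℝ ω x b a) :
    ∃ u : E → F, ∀ x, x ≠ 0 → HasFDerivAt u (ω x) x := by
  classical
  have : Nontrivial E := Module.nontrivial_of_finrank_pos (R := ℝ) (by omega)
  obtain ⟨e, he⟩ := exists_norm_eq E zero_le_one
  obtain ⟨u, hu⟩ := cdz_slit ω hd hs e he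
  obtain ⟨w, hw⟩ := cdz_slit ω hd hs (-e) (by simpa using he)
  have hO : IsOpen ({x : E | 0 < ‖x‖ + ⟪x, e⟫} ∩ {x : E | 0 < ‖x‖ + ⟪x, -e⟫}) :=
    (isOpen_lt continuous_const (by fun_prop)).inter (isOpen_lt continuous_const (by fun_prop))
  have hset : ({x : E | 0 < ‖x‖ + ⟪x, e⟫} ∩ {x : E | 0 < ‖x‖ + ⟪x, -e⟫}) =
      ((Submodule.span ℝ {e} : Submodule ℝ E) : Set E)ᶜ := by
    ext x
    simp only [Set.mem_inter_iff, Set.mem_ofPred_eq, Set.mem_compl_iff, SetLike.mem_coe,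
      Submodule.mem_span_singleton, inner_neg_right]
    constructor
    · rintro ⟨ha, hb⟩ ⟨c, rfl⟩
      rw [inner_smul_left, real_inner_self_eq_norm_sq, norm_smul, he] at ha hb
      simp at ha hb
      rcases abs_cases c with h | h <;> linarith
    · intro h
      have key : ‖x - ⟪x, e⟫ • e‖ ^ 2 = ‖x‖ ^ 2 - ⟪x, e⟫ ^ 2 := by
        rw [norm_sub_sq_real, norm_smul, he, inner_smul_right]
        simp
        ring
      have hpos : 0 < ‖x - ⟪x, e⟫ • e‖ ^ 2 := by
        have : x - ⟪x, e⟫ • e ≠ 0 := fun h0 => h ⟨⟪x, e⟫, (sub_eq_zero.1 h0).symm⟩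
        positivity
      have : |⟪x, e⟫| < ‖x‖ := abs_lt_of_sq_lt_sq (by linarith) (norm_nonneg _)
      rw [abs_lt] at this
      constructor <;> linarith [this.1, this.2]
  have hconn : IsPreconnected ({x : E | 0 < ‖x‖ + ⟪x, e⟫} ∩ {x : E | 0 < ‖x‖ + ⟪x, -e⟫}) := by
    rw [hset]
    refine (isConnected_compl_of_one_lt_codim ?_).isPreconnected
    have h1 := Submodule.finrank_quotient_add_finrank (Submodule.span ℝ {e})
    have h2 : Module.finrank ℝ (Submodule.span ℝ {e}) ≤ 1 := 
      (finrank_span_singleton (K := ℝ) (v := e) (by rintro rfl; simp at he)).le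
    rw [← Module.finrank_eq_rank]
    have : 1 < Module.finrank ℝ (E ⧸ Submodule.span ℝ {e}) := by omega
    exact_mod_cast this
  obtain ⟨c, hc⟩ := hO.exists_eq_add_of_fderiv_eq (𝕜 := ℝ) (f := u) (g := w) hconn
      (fun z hz => (hu z hz.1).differentiableAt.differentiableWithinAt)
      (fun z hz => (hw z hz.2).differentiableAt.differentiableWithinAt)
      (fun z hz => by rw [(hu z hz.1).fderiv, (hw z hz.2).fderiv])
  refine ⟨fun x => if 0 < ‖x‖ + ⟪x, e⟫ then u x else w x + c, fun x hx => ?_⟩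
  by_cases h : 0 < ‖x‖ + ⟪x, e⟫
  · refine (hu x h).congr_of_eventuallyEq ?_
    have o1 : {y : E | 0 < ‖y‖ + ⟪y, e⟫} ∈ nhds x :=
      (isOpen_lt continuous_const (by fun_prop)).mem_nhds h
    filter_upwards [o1] with y hy
    exact if_pos hy
  · have h' : 0 < ‖x‖ + ⟪x, -e⟫ := by
      rw [inner_neg_right]
      have := norm_pos_iff.2 hx
      linarith
    refine ((hw x h').add_const c).congr_of_eventuallyEq ?_
    have o1 : {y : E | 0 < ‖y‖ + ⟪y, -e⟫} ∈ nhds x :=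
      (isOpen_lt continuous_const (by fun_prop)).mem_nhds h'
    filter_upwards [o1] with y hy
    by_cases hy' : 0 < ‖y‖ + ⟪y, e⟫
    · rw [if_pos hy']
      exact hc ⟨hy', hy⟩
    · rw [if_neg hy']

end potential

lemma cdz_second {g g' : ℝ → ℝ} {D : ℝ} (hg : ∀ t, HasDerivAt g (g' t) t)
    (hD : HasDerivAt g' D 0) (hmax : ∀ t, g t ≤ g 0) : D ≤ 0 := by
  by_contra hpos
  push Not at hpos
  have hdg : deriv g = g' := funext fun t => (hg t).deriv
  have hm : IsLocalMax g 0 := Filter.Eventually.of_forall hmax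
  have h0 : deriv g 0 = 0 := hm.deriv_eq_zero
  have hmin : IsLocalMin g 0 := by
    apply isLocalMin_of_deriv_deriv_pos _ h0 (hg 0).continuousAt
    rw [hdg, hD.deriv]; exact hpos
  have hev : g =ᶠ[nhds 0] fun _ => g 0 := by
    filter_upwards [hmin] with t ht
    exact le_antisymm (hmax t) ht
  have h2 : deriv g =ᶠ[nhds 0] deriv (fun _ => g 0) := hev.deriv
  have h3 : deriv (deriv g) 0 = 0 := by
    rw [h2.deriv_eq]; simp
  rw [hdg, hD.deriv] at h3
  linarith

section sphere
variable {n : ℕ}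

lemma cdz_hasFDerivAt_norm_inv (x : EuclideanSpace ℝ (Fin (n+1))) (hx : x ≠ 0) :
    HasFDerivAt (fun y : EuclideanSpace ℝ (Fin (n+1)) => ‖y‖⁻¹) (-(‖x‖⁻¹ ^ 3) • innerSL ℝ x) x := by
  have h0 : ‖x‖ ≠ 0 := norm_ne_zero_iff.2 hx
  have h1 : HasFDerivAt (fun y : EuclideanSpace ℝ (Fin (n+1)) => ‖y‖ ^ 2) (2 • innerSL ℝ x) x :=
    (hasStrictFDerivAt_norm_sq x).hasFDerivAt
  have h2 : HasFDerivAt (fun y : EuclideanSpace ℝ (Fin (n+1)) => Real.sqrt (‖y‖ ^ 2)) _ x := h1.sqrt (by positivity)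
  have h3 := (hasDerivAt_inv (x := Real.sqrt (‖x‖ ^ 2))
    (by simpa [Real.sqrt_sq (norm_nonneg _)] using h0)).comp_hasFDerivAt x h2
  have h4 : ((fun y : ℝ => y⁻¹) ∘ fun y : EuclideanSpace ℝ (Fin (n+1)) => Real.sqrt (‖y‖ ^ 2)) = fun y : EuclideanSpace ℝ (Fin (n+1)) => ‖y‖⁻¹ := by
    funext y; simp [Real.sqrt_sq (norm_nonneg _)]
  have h5 : HasFDerivAt (fun y : EuclideanSpace ℝ (Fin (n+1)) => ‖y‖⁻¹) _ x := h4 ▸ h3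
  refine h5.congr_fderiv ?_
  ext v
  simp [Real.sqrt_sq (norm_nonneg _)]
  field_simp

lemma cdz_hasFDerivAt_unit (x : EuclideanSpace ℝ (Fin (n+1))) (hx : x ≠ 0) :
    HasFDerivAt (fun y : EuclideanSpace ℝ (Fin (n+1)) => ‖y‖⁻¹ • y)
      (‖x‖⁻¹ • ContinuousLinearMap.id ℝ (EuclideanSpace ℝ (Fin (n+1))) +
        (-(‖x‖⁻¹ ^ 3) • innerSL ℝ x).smulRight x) x :=
  (cdz_hasFDerivAt_norm_inv x hx).smul (hasFDerivAt_id x)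

lemma cdz_unit_mem (x : EuclideanSpace ℝ (Fin (n+1))) (hx : x ≠ 0) : ‖x‖⁻¹ • x ∈ Metric.sphere (0 : EuclideanSpace ℝ (Fin (n+1))) 1 := by
  have h0 : ‖x‖ ≠ 0 := norm_ne_zero_iff.2 hx
  simp [norm_smul, h0]

lemma cdz_tangent_deriv {F : Type*} [NormedAddCommGroup F] [NormedSpace ℝ F]
    {Φ : EuclideanSpace ℝ (Fin (n+1)) → F} {Φ' : EuclideanSpace ℝ (Fin (n+1)) →L[ℝ] F} {p : EuclideanSpace ℝ (Fin (n+1))} (hp : p ∈ Metric.sphere (0 : EuclideanSpace ℝ (Fin (n+1))) 1)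
    (hΦ : HasFDerivAt Φ Φ' p) (h0 : ∀ x ∈ Metric.sphere (0 : EuclideanSpace ℝ (Fin (n+1))) 1, Φ x = 0)
    (X : EuclideanSpace ℝ (Fin (n+1))) (hX : ⟪X, p⟫ = 0) : Φ' X = 0 := by
  have hp1 : ‖p‖ = 1 := by simpa using hp
  have hp0 : p ≠ 0 := by rintro rfl; simp at hp1
  have hr := cdz_hasFDerivAt_unit p hp0
  have hΦ' : HasFDerivAt Φ Φ' (‖p‖⁻¹ • p) := by simpa [hp1] using hΦ
  have hc : HasFDerivAt (fun y : EuclideanSpace ℝ (Fin (n+1)) => Φ (‖y‖⁻¹ • y)) _ p := HasFDerivAt.comp p hΦ' hr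
  have hz : (fun y : EuclideanSpace ℝ (Fin (n+1)) => Φ (‖y‖⁻¹ • y)) =ᶠ[nhds p] fun _ => 0 := by
    filter_upwards [isOpen_ne.mem_nhds hp0] with y hy
    exact h0 _ (cdz_unit_mem y hy)
  have h2 := (hc.congr_of_eventuallyEq hz.symm).unique (hasFDerivAt_const (0 : F) p)
  have h3 := DFunLike.congr_fun h2 X
  have hX' : ⟪p, X⟫ = 0 := by rw [real_inner_comm]; exact hX
  simpa [hp1, hX'] using h3

lemma cdz_sum_single (p : EuclideanSpace ℝ (Fin (n+1))) : ∑ i, p i • (EuclideanSpace.single i (1:ℝ) : EuclideanSpace ℝ (Fin (n+1))) = p := by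
  ext j
  simp [Finset.sum_apply, Pi.single_apply]

lemma cdz_trace (B : EuclideanSpace ℝ (Fin (n+1)) →L[ℝ] EuclideanSpace ℝ (Fin (n+1)) →L[ℝ] ℝ) (p : EuclideanSpace ℝ (Fin (n+1))) (hp : ‖p‖ = 1) :
    ∑ i, B (tanProj p (EuclideanSpace.single i (1:ℝ))) (tanProj p (EuclideanSpace.single i (1:ℝ)))
      = ∑ i, B (EuclideanSpace.single i (1:ℝ)) (EuclideanSpace.single i (1:ℝ)) - B p p := by
  have h1 : ∑ i, p i * B (EuclideanSpace.single i (1:ℝ)) p = B p p := by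
    conv_rhs => rw [← cdz_sum_single p]
    conv_rhs => enter [2]; rw [cdz_sum_single p]
    simp
  have h2 : ∑ i, p i * B p (EuclideanSpace.single i (1:ℝ)) = B p p := by
    conv_rhs => enter [2]; rw [← cdz_sum_single p]
    simp
  have h3 : ∑ i, p i * p i = 1 := by
    have := EuclideanSpace.real_norm_sq_eq p
    rw [hp] at this
    simpa [sq] using this.symm
  have h4 : ∀ i, B (tanProj p (EuclideanSpace.single i (1:ℝ)))
      (tanProj p (EuclideanSpace.single i (1:ℝ))) =
      B (EuclideanSpace.single i (1:ℝ)) (EuclideanSpace.single i (1:ℝ))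
      - p i * B (EuclideanSpace.single i (1:ℝ)) p - p i * B p (EuclideanSpace.single i (1:ℝ))
      + p i * p i * B p p := by
    intro i
    simp [tanProj, EuclideanSpace.inner_single_left]
    ring
  simp_rw [h4]
  rw [Finset.sum_add_distrib, Finset.sum_sub_distrib, Finset.sum_sub_distrib, h1, h2,
    ← Finset.sum_mul, h3]
  ring

lemma cdz_tanProj_orth (p v : EuclideanSpace ℝ (Fin (n+1))) (hp : ‖p‖ = 1) : ⟪tanProj p v, p⟫ = 0 := by
  rw [tanProj, inner_sub_left, inner_smul_left, real_inner_self_eq_norm_sq, hp]; simp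

variable {T : EuclideanSpace ℝ (Fin (n+1)) → EuclideanSpace ℝ (Fin (n+1)) →L[ℝ] EuclideanSpace ℝ (Fin (n+1)) →L[ℝ] ℝ}

lemma cdz_F1 (hT : IsTraceFreeCodazziSphere T) {p : EuclideanSpace ℝ (Fin (n+1))} (hp : p ∈ Metric.sphere (0 : EuclideanSpace ℝ (Fin (n+1))) 1)
    (X : EuclideanSpace ℝ (Fin (n+1))) (hX : ⟪X, p⟫ = 0) : fderiv ℝ T p X p = - T p X := by
  have h := (hT.diff p).hasFDerivAt.clm_apply (hasFDerivAt_id p)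
  have := cdz_tangent_deriv hp h (fun x hx => by ext y; simpa using hT.tangential x hx y) X hX
  simp at this
  exact eq_neg_of_add_eq_zero_right this

lemma cdz_F3 (hT : IsTraceFreeCodazziSphere T) {p : EuclideanSpace ℝ (Fin (n+1))} (hp : p ∈ Metric.sphere (0 : EuclideanSpace ℝ (Fin (n+1))) 1)
    (X : EuclideanSpace ℝ (Fin (n+1))) (hX : ⟪X, p⟫ = 0) :
    ∑ i, fderiv ℝ T p X (EuclideanSpace.single i (1:ℝ)) (EuclideanSpace.single i (1:ℝ)) = 0 := by
  have h := HasFDerivAt.fun_sum (u := Finset.univ) (fun (i : Fin (n+1)) _ =>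
    ((hT.diff p).hasFDerivAt.clm_apply
      (hasFDerivAt_const (EuclideanSpace.single i (1:ℝ) : EuclideanSpace ℝ (Fin (n+1))) p)).clm_apply
      (hasFDerivAt_const (EuclideanSpace.single i (1:ℝ) : EuclideanSpace ℝ (Fin (n+1))) p))
  have := cdz_tangent_deriv hp h (fun x hx => hT.traceFree x hx) X hX
  simpa using this

lemma cdz_tanProj_deriv (p Y : EuclideanSpace ℝ (Fin (n+1))) : HasFDerivAt (fun x : EuclideanSpace ℝ (Fin (n+1)) => tanProj x Y)
    (-(⟪Y, p⟫ • ContinuousLinearMap.id ℝ (EuclideanSpace ℝ (Fin (n+1))) + (innerSL ℝ Y).smulRight p)) p := by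
  have h1 : HasFDerivAt (fun x : EuclideanSpace ℝ (Fin (n+1)) => ⟪Y, x⟫) (innerSL ℝ Y) p := (innerSL ℝ Y).hasFDerivAt
  have := (h1.smul (hasFDerivAt_id p)).const_sub Y
  exact this

lemma cdz_tanProj_self (p Y : EuclideanSpace ℝ (Fin (n+1))) (hY : ⟪Y, p⟫ = 0) : tanProj p Y = Y := by
  simp [tanProj, hY]

lemma cdz_cov (hT : IsTraceFreeCodazziSphere T) {p : EuclideanSpace ℝ (Fin (n+1))} (hp : p ∈ Metric.sphere (0 : EuclideanSpace ℝ (Fin (n+1))) 1)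
    (X Y Z : EuclideanSpace ℝ (Fin (n+1))) (hX : ⟪X, p⟫ = 0) (hY : ⟪Y, p⟫ = 0) (hZ : ⟪Z, p⟫ = 0) :
    covDerivT T p X Y Z = fderiv ℝ T p X Y Z := by
  have hp1 : ‖p‖ = 1 := by simpa using hp
  have t1 : ∀ c : ℝ, ∀ V, T p (c • p) V = 0 := fun c V => by
    simp [hT.tangential p hp]
  have t2 : ∀ c : ℝ, ∀ V, T p V (c • p) = 0 := fun c V => by rw [hT.symm]; exact t1 c V
  have t3 : ∀ c : ℝ, tanProj p (c • p) = 0 := fun c => by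
    simp [tanProj, inner_smul_left, hp1]
  have d1 : ∀ V : EuclideanSpace ℝ (Fin (n+1)), ⟪V, p⟫ = 0 → fderiv ℝ (fun x : EuclideanSpace ℝ (Fin (n+1)) => tanProj x V) p X = (-⟪V, X⟫) • p := by
    intro V hV
    rw [(cdz_tanProj_deriv p V).fderiv]
    simp [hV]
  have h := ((hT.diff p).hasFDerivAt.clm_apply (cdz_tanProj_deriv p Y)).clm_apply
    (cdz_tanProj_deriv p Z)
  rw [covDerivT, d1 Y hY, d1 Z hZ, t3, t3, h.fderiv]
  have t4 : T p p = 0 := by ext V; simpa using hT.tangential p hp V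
  have t5 : ∀ V, T p V p = 0 := fun V => by simpa using t2 1 V
  simp [cdz_tanProj_self, hY, hZ, t4, t5]

lemma cdz_F2s (hT : IsTraceFreeCodazziSphere T) (p : EuclideanSpace ℝ (Fin (n+1))) 
    (A B C : EuclideanSpace ℝ (Fin (n+1))) : fderiv ℝ T p A B C = fderiv ℝ T p A C B := by
    have h1 := ((hT.diff p).hasFDerivAt.clm_apply (hasFDerivAt_const B p)).clm_apply
      (hasFDerivAt_const C p)
    have h2 := ((hT.diff p).hasFDerivAt.clm_apply (hasFDerivAt_const C p)).clm_apply
      (hasFDerivAt_const B p)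
    have h3 : (fun x => T x B C) = fun x => T x C B := funext fun x => hT.symm x B C
    have h4 := DFunLike.congr_fun ((h3 ▸ h1).unique h2) A
    simpa using h4

lemma cdz_F2 (hT : IsTraceFreeCodazziSphere T) {p : EuclideanSpace ℝ (Fin (n+1))} (hp : p ∈ Metric.sphere (0 : EuclideanSpace ℝ (Fin (n+1))) 1)
    (X Y : EuclideanSpace ℝ (Fin (n+1))) (hX : ⟪X, p⟫ = 0) (hY : ⟪Y, p⟫ = 0) :
    fderiv ℝ T p X Y = fderiv ℝ T p Y X := by
  have hp1 : ‖p‖ = 1 := by simpa using hp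
  have hsym := cdz_F2s hT p
  ext z
  have hz : z = tanProj p z + ⟪z, p⟫ • p := by simp [tanProj]
  have ht := cdz_tanProj_orth p z hp1
  rw [hz, map_add, map_add, ← cdz_cov hT hp X Y _ hX hY ht, ← cdz_cov hT hp Y X _ hY hX ht,
    hT.codazzi p hp X Y _ hX hY ht]
  simp only [map_smul]
  rw [hsym X Y p, hsym Y X p, cdz_F1 hT hp X hX, cdz_F1 hT hp Y hY]
  simp [hT.symm p X Y]

lemma cdz_F4 (hT : IsTraceFreeCodazziSphere T) {p : EuclideanSpace ℝ (Fin (n+1))} (hp : p ∈ Metric.sphere (0 : EuclideanSpace ℝ (Fin (n+1))) 1)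
    (z : EuclideanSpace ℝ (Fin (n+1))) :
    ∑ i, fderiv ℝ T p (tanProj p (EuclideanSpace.single i (1:ℝ)))
      (tanProj p (EuclideanSpace.single i (1:ℝ))) z = 0 := by
  have hp1 : ‖p‖ = 1 := by simpa using hp
  have hz : z = tanProj p z + ⟪z, p⟫ • p := by simp [tanProj]
  have ht := cdz_tanProj_orth p z hp1
  have ho := fun i : Fin (n+1) => cdz_tanProj_orth p (EuclideanSpace.single i (1:ℝ)) hp1
  have e1 : ∀ i, fderiv ℝ T p (tanProj p (EuclideanSpace.single i (1:ℝ)))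
      (tanProj p (EuclideanSpace.single i (1:ℝ))) z =
      fderiv ℝ T p (tanProj p z) (tanProj p (EuclideanSpace.single i (1:ℝ)))
        (tanProj p (EuclideanSpace.single i (1:ℝ)))
      - ⟪z, p⟫ * T p (tanProj p (EuclideanSpace.single i (1:ℝ)))
        (tanProj p (EuclideanSpace.single i (1:ℝ))) := by
    intro i
    conv_lhs => rw [hz]
    rw [map_add, map_smul, cdz_F2s hT, cdz_F2s hT p _ _ p, cdz_F1 hT hp _ (ho i),
      cdz_F2 hT hp _ _ (ho i) ht]
    simp
    ring
  simp_rw [e1]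
  rw [Finset.sum_sub_distrib, ← Finset.mul_sum, cdz_trace _ p hp1, cdz_trace _ p hp1,
    cdz_F3 hT hp _ ht, hT.traceFree p hp, cdz_F1 hT hp _ ht, hT.tangential p hp]
  simp [hT.symm p _ p, hT.tangential p hp]

lemma cdz_gen_S {F : Type*} [NormedAddCommGroup F] [NormedSpace ℝ F] (T : (EuclideanSpace ℝ (Fin (n+1))) → F)
    (hT : Differentiable ℝ T) (x : (EuclideanSpace ℝ (Fin (n+1)))) (hx : x ≠ 0) :
    HasFDerivAt (fun y : (EuclideanSpace ℝ (Fin (n+1))) => ‖y‖⁻¹ • T (‖y‖⁻¹ • y))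
      (‖x‖⁻¹ • ((fderiv ℝ T (‖x‖⁻¹ • x)) ∘L (‖x‖⁻¹ • ContinuousLinearMap.id ℝ (EuclideanSpace ℝ (Fin (n+1))) +
        (-(‖x‖⁻¹ ^ 3) • innerSL ℝ x).smulRight x)) +
        (-(‖x‖⁻¹ ^ 3) • innerSL ℝ x).smulRight (T (‖x‖⁻¹ • x))) x := by
  have h2 : HasFDerivAt (fun y : (EuclideanSpace ℝ (Fin (n+1))) => T (‖y‖⁻¹ • y)) _ x :=
    HasFDerivAt.comp (g := T) (f := fun y : (EuclideanSpace ℝ (Fin (n+1))) => ‖y‖⁻¹ • y) x (hT (‖x‖⁻¹ • x)).hasFDerivAt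
      (cdz_hasFDerivAt_unit x hx)
  exact (cdz_hasFDerivAt_norm_inv x hx).smul h2

lemma cdz_gen_along2 {E F : Type*} [NormedAddCommGroup E] [NormedSpace ℝ E]
    [NormedAddCommGroup F] [NormedSpace ℝ F] (T : E → E →L[ℝ] F)
    (hT : Differentiable ℝ T) (c c' : ℝ → E) (d : E) (h1 : HasDerivAt c (c' 0) 0)
    (h2 : HasDerivAt c' d 0) :
    HasDerivAt (fun t : ℝ => T (c t) (c' t)) (fderiv ℝ T (c 0) (c' 0) (c' 0) + T (c 0) d) 0 :=
  ((hT (c 0)).hasFDerivAt.comp_hasDerivAt 0 h1).clm_apply h2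

lemma cdz_S_deriv (hT : IsTraceFreeCodazziSphere T) (x : (EuclideanSpace ℝ (Fin (n+1)))) (hx : x ≠ 0) :
    ∃ D : (EuclideanSpace ℝ (Fin (n+1))) →L[ℝ] (EuclideanSpace ℝ (Fin (n+1))) →L[ℝ] (EuclideanSpace ℝ (Fin (n+1))) →L[ℝ] ℝ,
      HasFDerivAt (fun y : (EuclideanSpace ℝ (Fin (n+1))) => ‖y‖⁻¹ • T (‖y‖⁻¹ • y)) D x ∧ ∀ a b, D a b = D b a := by
  have hp := cdz_unit_mem x hx
  have hp1 : ‖‖x‖⁻¹ • x‖ = 1 := by simpa using hp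
  have h0 : ‖x‖ ≠ 0 := norm_ne_zero_iff.2 hx
  have h3 := cdz_gen_S T hT.diff x hx
  refine ⟨_, h3, ?_⟩
  intro a b
  set p := ‖x‖⁻¹ • x with hpdef
  have hxp : x = ‖x‖ • p := by rw [hpdef, smul_smul, mul_inv_cancel₀ h0, one_smul]
  have hx' : ∀ c : ℝ, c • x = (c * ‖x‖) • p := fun c => by
    rw [mul_smul, ← hxp]
  have hin : ∀ v : (EuclideanSpace ℝ (Fin (n+1))), ⟪x, v⟫ = ‖x‖ * ⟪v, p⟫ := by
    intro v
    conv_lhs => rw [hxp]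
    rw [inner_smul_left, real_inner_comm]; simp
  -- the formula for the derivative
  have key : ∀ a b : (EuclideanSpace ℝ (Fin (n+1))), (‖x‖⁻¹ • ((fderiv ℝ T p) ∘L (‖x‖⁻¹ • ContinuousLinearMap.id ℝ (EuclideanSpace ℝ (Fin (n+1))) +
        (-(‖x‖⁻¹ ^ 3) • innerSL ℝ x).smulRight x)) +
        (-(‖x‖⁻¹ ^ 3) • innerSL ℝ x).smulRight (T p)) a b =
      (‖x‖⁻¹ ^ 2) • (fderiv ℝ T p (tanProj p a) (tanProj p b) - ⟪b, p⟫ • T p a - ⟪a, p⟫ • T p b) := by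
    intro a b
    have ha := cdz_tanProj_orth p a hp1
    have e1 : (‖x‖⁻¹ • ContinuousLinearMap.id ℝ (EuclideanSpace ℝ (Fin (n+1))) +
        (-(‖x‖⁻¹ ^ 3) • innerSL ℝ x).smulRight x) a = ‖x‖⁻¹ • tanProj p a := by
      simp only [add_apply, smul_apply,
        ContinuousLinearMap.id_apply, ContinuousLinearMap.smulRight_apply, innerSL_apply_apply, hin,
        tanProj, smul_sub]
      rw [hx']
      simp only [smul_eq_mul]
      clear_value p
      match_scalars <;> field_simp
    have e2 : fderiv ℝ T p (tanProj p a) b =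
        fderiv ℝ T p (tanProj p a) (tanProj p b) - ⟪b, p⟫ • T p a := by
      have hb : b = tanProj p b + ⟪b, p⟫ • p := by simp [tanProj]
      have hTa : T p (tanProj p a) = T p a := by
        have : T p p = 0 := by ext V; simpa using hT.tangential p hp V
        simp [tanProj, this]
      conv_lhs => rw [hb]
      rw [map_add, map_smul, cdz_F1 hT hp _ ha, hTa, smul_neg, sub_eq_add_neg]
    rw [add_apply, smul_apply,
      ContinuousLinearMap.comp_apply, e1, map_smul, add_apply,
      smul_apply, smul_apply, e2]
    simp only [ContinuousLinearMap.smulRight_apply, smul_apply,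
      innerSL_apply_apply, hin]
    simp only [smul_eq_mul]
    match_scalars <;> field_simp
  refine (key a b).trans (Eq.trans ?_ (key b a).symm)
  rw [cdz_F2 hT hp _ _ (cdz_tanProj_orth p a hp1) (cdz_tanProj_orth p b hp1), sub_right_comm]

lemma cdz_geo_norm (p e : (EuclideanSpace ℝ (Fin (n+1)))) (hp : ‖p‖ = 1) (he : ‖e‖ = 1) (hpe : ⟪e, p⟫ = 0) (t : ℝ) :
    ‖Real.cos t • p + Real.sin t • e‖ = 1 := by
  have : ‖Real.cos t • p + Real.sin t • e‖ ^ 2 = 1 := by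
    rw [norm_add_sq_real, norm_smul, norm_smul, inner_smul_left, inner_smul_right,
      real_inner_comm, hpe, hp, he]
    simp
  nlinarith [norm_nonneg (Real.cos t • p + Real.sin t • e)]

lemma cdz_geo_deriv (p e : (EuclideanSpace ℝ (Fin (n+1)))) (t : ℝ) :
    HasDerivAt (fun t : ℝ => Real.cos t • p + Real.sin t • e)
      (-Real.sin t • p + Real.cos t • e) t :=
  ((Real.hasDerivAt_cos t).smul_const p).add ((Real.hasDerivAt_sin t).smul_const e)

lemma cdz_geo_deriv2 (p e : (EuclideanSpace ℝ (Fin (n+1)))) :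
    HasDerivAt (fun t : ℝ => -Real.sin t • p + Real.cos t • e) (-p) 0 := by
  have h : HasDerivAt (fun t : ℝ => -Real.sin t • p + Real.cos t • e) _ 0 :=
    (((Real.hasDerivAt_sin 0).neg).smul_const p).add ((Real.hasDerivAt_cos 0).smul_const e)
  exact h.congr_deriv (by simp)

lemma cdz_along (hT : IsTraceFreeCodazziSphere T) {u : (EuclideanSpace ℝ (Fin (n+1))) → (EuclideanSpace ℝ (Fin (n+1))) →L[ℝ] ℝ}
    (hu : ∀ x, x ≠ 0 → HasFDerivAt u (‖x‖⁻¹ • T (‖x‖⁻¹ • x)) x) (z p e : (EuclideanSpace ℝ (Fin (n+1))))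
    (hp : ‖p‖ = 1) (he : ‖e‖ = 1) (hpe : ⟪e, p⟫ = 0) (t : ℝ) :
    HasDerivAt (fun t : ℝ => u (Real.cos t • p + Real.sin t • e) z)
      (T (Real.cos t • p + Real.sin t • e) (-Real.sin t • p + Real.cos t • e) z) t := by
  have hn := cdz_geo_norm p e hp he hpe t
  have h0 : Real.cos t • p + Real.sin t • e ≠ 0 := by
    intro h; rw [h] at hn; simp at hn
  have h1 := hu _ h0
  rw [hn] at h1
  simp only [inv_one, one_smul] at h1
  have h2 := h1.comp_hasDerivAt t (cdz_geo_deriv p e t)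
  have h3 := (ContinuousLinearMap.apply ℝ ℝ z).hasFDerivAt.comp_hasDerivAt t h2
  exact h3

lemma cdz_along2 (hT : IsTraceFreeCodazziSphere T) (z p e : (EuclideanSpace ℝ (Fin (n+1))))
    (hp : p ∈ Metric.sphere (0 : (EuclideanSpace ℝ (Fin (n+1)))) 1) :
    HasDerivAt (fun t : ℝ => T (Real.cos t • p + Real.sin t • e)
      (-Real.sin t • p + Real.cos t • e) z) (fderiv ℝ T p e e z) 0 := by
  have hTp : T p p = 0 := by ext V; simpa using hT.tangential p hp V
  have h1 := cdz_gen_along2 T hT.diff (fun t : ℝ => Real.cos t • p + Real.sin t • e)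
    (fun t : ℝ => -Real.sin t • p + Real.cos t • e) (-p) (cdz_geo_deriv p e 0) (cdz_geo_deriv2 p e)
  have h2 : HasDerivAt (fun t : ℝ => T (Real.cos t • p + Real.sin t • e)
      (-Real.sin t • p + Real.cos t • e)) (fderiv ℝ T p e e) 0 :=
    h1.congr_deriv (by simp [hTp])
  exact (ContinuousLinearMap.apply ℝ ℝ z).hasFDerivAt.comp_hasDerivAt 0 h2

lemma cdz_barrier (α : ℝ) (q p e : (EuclideanSpace ℝ (Fin (n+1)))) (t : ℝ) :
    HasDerivAt (fun t : ℝ => Real.exp (α * ⟪q, Real.cos t • p + Real.sin t • e⟫))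
      (Real.exp (α * ⟪q, Real.cos t • p + Real.sin t • e⟫) *
        (α * ⟪q, -Real.sin t • p + Real.cos t • e⟫)) t := by
  have h := ((innerSL ℝ q).hasFDerivAt.comp_hasDerivAt t (cdz_geo_deriv p e t))
  exact (h.const_mul α).exp

lemma cdz_barrier2 (α : ℝ) (q p e : (EuclideanSpace ℝ (Fin (n+1)))) :
    HasDerivAt (fun t : ℝ => Real.exp (α * ⟪q, Real.cos t • p + Real.sin t • e⟫) *
        (α * ⟪q, -Real.sin t • p + Real.cos t • e⟫))
      (Real.exp (α * ⟪q, p⟫) * (α ^ 2 * ⟪q, e⟫ ^ 2 - α * ⟪q, p⟫)) 0 := by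
  have h := ((innerSL ℝ q).hasFDerivAt.comp_hasDerivAt 0 (cdz_geo_deriv2 p e)).const_mul α
  have h2 := (cdz_barrier α q p e 0).mul h
  refine h2.congr_deriv ?_
  simp
  ring

/-- At a maximum on the sphere of `u z + ε exp (α ⟪q, ·⟫)`. -/
lemma cdz_at_max (hT : IsTraceFreeCodazziSphere T) {u : (EuclideanSpace ℝ (Fin (n+1))) → (EuclideanSpace ℝ (Fin (n+1))) →L[ℝ] ℝ}
    (hu : ∀ x, x ≠ 0 → HasFDerivAt u (‖x‖⁻¹ • T (‖x‖⁻¹ • x)) x) (z q p : (EuclideanSpace ℝ (Fin (n+1))))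
    (hp : p ∈ Metric.sphere (0 : (EuclideanSpace ℝ (Fin (n+1)))) 1) (hq : ‖q‖ = 1) (α ε : ℝ) (hε : 0 < ε)
    (hmax : ∀ x ∈ Metric.sphere (0 : (EuclideanSpace ℝ (Fin (n+1)))) 1,
      u x z + ε * Real.exp (α * ⟪q, x⟫) ≤ u p z + ε * Real.exp (α * ⟪q, p⟫)) :
    α ^ 2 * (1 - ⟪q, p⟫ ^ 2) - n * (α * ⟪q, p⟫) ≤ 0 := by
  have hp1 : ‖p‖ = 1 := by simpa using hp
  -- unit vectors
  have hunit : ∀ e : (EuclideanSpace ℝ (Fin (n+1))), ‖e‖ = 1 → ⟪e, p⟫ = 0 → fderiv ℝ T p e e z +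
      ε * (Real.exp (α * ⟪q, p⟫) * (α ^ 2 * ⟪q, e⟫ ^ 2 - α * ⟪q, p⟫)) ≤ 0 := by
    intro e he hpe
    refine cdz_second
      (fun t => (cdz_along hT hu z p e hp1 he hpe t).add ((cdz_barrier α q p e t).const_mul ε))
      ((cdz_along2 hT z p e hp).add ((cdz_barrier2 α q p e).const_mul ε)) (fun t => ?_)
    have := hmax (Real.cos t • p + Real.sin t • e)
      (by simpa using cdz_geo_norm p e hp1 he hpe t)
    simpa using this
  have hall : ∀ e : (EuclideanSpace ℝ (Fin (n+1))), ⟪e, p⟫ = 0 → fderiv ℝ T p e e z +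
      ε * (Real.exp (α * ⟪q, p⟫) * (α ^ 2 * (⟪q, e⟫ * ⟪q, e⟫) - α * ⟪q, p⟫ * ⟪e, e⟫)) ≤ 0 := by
    intro e hpe
    by_cases he : e = 0
    · simp [he]
    have hn := norm_ne_zero_iff.2 he
    have h1 := hunit (‖e‖⁻¹ • e) (by simp [norm_smul, hn]) (by simp [inner_smul_left, hpe])
    have h2 := mul_nonpos_of_nonneg_of_nonpos (sq_nonneg ‖e‖) h1
    refine le_trans (le_of_eq ?_) h2
    simp [inner_smul_right]
    field_simp
  have hsum := Finset.sum_nonpos (s := Finset.univ) (fun (i : Fin (n+1)) _ =>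
    hall _ (cdz_tanProj_orth p (EuclideanSpace.single i (1:ℝ)) hp1))
  have t1 : ∑ i, ⟪tanProj p (EuclideanSpace.single i (1:ℝ)),
      tanProj p (EuclideanSpace.single i (1:ℝ))⟫ =
      ∑ i : Fin (n+1), ⟪(EuclideanSpace.single i (1:ℝ) : (EuclideanSpace ℝ (Fin (n+1)))),
        (EuclideanSpace.single i (1:ℝ) : (EuclideanSpace ℝ (Fin (n+1))))⟫ - ⟪p, p⟫ := cdz_trace (innerSL ℝ) p hp1
  have t2 := cdz_trace ((innerSL ℝ q).smulRight (innerSL ℝ q)) p hp1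
  simp only [innerSL_apply_apply, ContinuousLinearMap.smulRight_apply,
    smul_apply, smul_eq_mul] at t2
  have t3 : ∑ i, ⟪q, (EuclideanSpace.single i (1:ℝ) : (EuclideanSpace ℝ (Fin (n+1))))⟫ * ⟪q, (EuclideanSpace.single i (1:ℝ) : (EuclideanSpace ℝ (Fin (n+1))))⟫
      = 1 := by
    have := EuclideanSpace.real_norm_sq_eq q
    rw [hq] at this
    simpa [EuclideanSpace.inner_single_right, sq] using this.symm
  have t4 : ∑ i : Fin (n+1), ⟪(EuclideanSpace.single i (1:ℝ) : (EuclideanSpace ℝ (Fin (n+1)))), (EuclideanSpace.single i (1:ℝ) : (EuclideanSpace ℝ (Fin (n+1))))⟫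
      = (n : ℝ) + 1 := by simp
  rw [t3] at t2
  rw [t4, real_inner_self_eq_norm_sq, hp1] at t1
  rw [Finset.sum_add_distrib, cdz_F4 hT hp z, ← Finset.mul_sum, ← Finset.mul_sum,
    Finset.sum_sub_distrib, ← Finset.mul_sum, ← Finset.mul_sum, t1, t2] at hsum
  have hE : 0 < ε * Real.exp (α * ⟪q, p⟫) := mul_pos hε (Real.exp_pos _)
  rw [zero_add, ← mul_assoc] at hsum
  have := nonpos_of_mul_nonpos_right hsum hE
  linarith

lemma cdz_const (hn : 0 < n) (hT : IsTraceFreeCodazziSphere T) {u : (EuclideanSpace ℝ (Fin (n+1))) → (EuclideanSpace ℝ (Fin (n+1))) →L[ℝ] ℝ}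
    (hu : ∀ x, x ≠ 0 → HasFDerivAt u (‖x‖⁻¹ • T (‖x‖⁻¹ • x)) x) (z p q : (EuclideanSpace ℝ (Fin (n+1))))
    (hp : p ∈ Metric.sphere (0 : (EuclideanSpace ℝ (Fin (n+1)))) 1) (hq : q ∈ Metric.sphere (0 : (EuclideanSpace ℝ (Fin (n+1)))) 1) :
    u p z ≤ u q z := by
  by_contra hlt
  push Not at hlt
  have hq1 : ‖q‖ = 1 := by simpa using hq
  have hp1 : ‖p‖ = 1 := by simpa using hp
  have hcomp : IsCompact (Metric.sphere (0 : (EuclideanSpace ℝ (Fin (n+1)))) 1) := isCompact_sphere _ _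
  have hne : ∀ x ∈ Metric.sphere (0 : (EuclideanSpace ℝ (Fin (n+1)))) 1, x ≠ 0 := by
    rintro x hx rfl; simp at hx
  have hcont : ContinuousOn (fun x => u x z) (Metric.sphere (0 : (EuclideanSpace ℝ (Fin (n+1)))) 1) := fun x hx =>
    ((hu x (hne x hx)).continuousAt.clm_apply continuousAt_const).continuousWithinAt
  obtain ⟨m, hm, hmm⟩ := hcomp.exists_isMaxOn ⟨p, hp⟩ hcont
  have hmq : u q z < u m z := lt_of_lt_of_le hlt (hmm hp)
  set η := (u m z - u q z) / 2 with hη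
  have hη0 : 0 < η := by rw [hη]; linarith
  have hcq : ContinuousAt (fun x => u x z) q :=
    (hu q (hne q hq)).continuousAt.clm_apply continuousAt_const
  obtain ⟨r, hr, hball⟩ := Metric.continuousAt_iff.1 hcq η hη0
  -- δ with ⟪q,x⟫ > 1 - δ → dist x q < r
  set δ := min (r ^ 2 / 2) 1 with hδ
  have hδ0 : 0 < δ := by rw [hδ]; positivity
  have hδ1 : δ ≤ 1 := min_le_right _ _
  have hδr : δ ≤ r ^ 2 / 2 := min_le_left _ _
  set α := ((n : ℝ) + 1) / δ with hα
  have hα0 : 0 < α := by rw [hα]; positivity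
  have hαδ : α * δ = n + 1 := by rw [hα]; field_simp
  set ε := η / (2 * Real.exp α) with hε
  have hε0 : 0 < ε := by rw [hε]; positivity
  have hεη : ε * Real.exp α = η / 2 := by
    rw [hε]; field_simp
  have hcontw : ContinuousOn (fun x => u x z + ε * Real.exp (α * ⟪q, x⟫))
      (Metric.sphere (0 : (EuclideanSpace ℝ (Fin (n+1)))) 1) := hcont.add (by fun_prop)
  obtain ⟨x, hx, hxm⟩ := hcomp.exists_isMaxOn ⟨p, hp⟩ hcontw
  have hx1 : ‖x‖ = 1 := by simpa using hx
  have hle1 : ⟪q, x⟫ ≤ 1 := by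
    have := real_inner_le_norm q x
    rwa [hq1, hx1, one_mul] at this
  have hge1 : -1 ≤ ⟪q, x⟫ := by
    have := neg_le_of_abs_le (abs_real_inner_le_norm q x)
    rwa [hq1, hx1, one_mul] at this
  by_cases hc : ⟪q, x⟫ ≤ 1 - δ
  · have h := cdz_at_max hT hu z q x hx hq1 α ε hε0 (fun y hy => hxm hy)
    set s := ⟪q, x⟫
    have h' : α * (1 - s ^ 2) - n * s ≤ 0 := by
      have : α * (α * (1 - s ^ 2) - n * s) ≤ 0 := by linarith
      exact nonpos_of_mul_nonpos_right this hα0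
    have hn1 : (0:ℝ) < n := Nat.cast_pos.2 hn
    have hn0 : (0:ℝ) ≤ n := hn1.le
    rcases le_or_gt s 0 with hs | hs
    · have a1 : 0 ≤ α * (1 - s ^ 2) := mul_nonneg hα0.le (by nlinarith)
      have a2 : (n:ℝ) * s ≤ 0 := mul_nonpos_of_nonneg_of_nonpos hn0 hs
      rcases hs.lt_or_eq with hs' | hs'
      · nlinarith
      · rw [hs'] at h'; simp at h'; linarith
    · have a1 : δ ≤ 1 - s ^ 2 := by nlinarith
      have a2 : α * δ ≤ α * (1 - s ^ 2) := mul_le_mul_of_nonneg_left a1 hα0.le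
      nlinarith
  · push Not at hc
    have hdist : dist x q < r := by
      rw [dist_eq_norm]
      have : ‖x - q‖ ^ 2 < r ^ 2 := by
        rw [norm_sub_sq_real, hx1, hq1, real_inner_comm]
        linarith
      exact lt_of_pow_lt_pow_left₀ 2 hr.le this
    have h1 := hball hdist
    rw [Real.dist_eq, abs_lt] at h1
    have h2 : u m z + ε * Real.exp (α * ⟪q, m⟫) ≤ u x z + ε * Real.exp (α * ⟪q, x⟫) := hxm hm
    have h3 : Real.exp (α * ⟪q, x⟫) ≤ Real.exp α := Real.exp_le_exp.2 (by nlinarith)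
    have h4 : 0 < ε * Real.exp (α * ⟪q, m⟫) := by positivity
    have h5 := mul_le_mul_of_nonneg_left h3 hε0.le
    linarith [h1.2]

lemma cdz_main (hn : 2 ≤ n) (hT : IsTraceFreeCodazziSphere T) (p : (EuclideanSpace ℝ (Fin (n+1))))
    (hp : p ∈ Metric.sphere (0 : (EuclideanSpace ℝ (Fin (n+1)))) 1) : T p = 0 := by
  have hp1 : ‖p‖ = 1 := by simpa using hp
  obtain ⟨u, hu⟩ := cdz_potential (E := (EuclideanSpace ℝ (Fin (n+1)))) (by simp; omega)
    (fun y : (EuclideanSpace ℝ (Fin (n+1))) => ‖y‖⁻¹ • T (‖y‖⁻¹ • y))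
    (fun x hx => by
      obtain ⟨D, hD, -⟩ := cdz_S_deriv hT x hx
      exact hD.differentiableAt)
    (fun x hx a b => by
      obtain ⟨D, hD, hs⟩ := cdz_S_deriv hT x hx
      rw [hD.fderiv]; exact hs a b)
  have hunit : ∀ e : (EuclideanSpace ℝ (Fin (n+1))), ‖e‖ = 1 → ⟪e, p⟫ = 0 → T p e = 0 := by
    intro e he hpe
    ext z
    have h1 := cdz_along hT hu z p e hp1 he hpe 0
    have h2 : (fun t : ℝ => u (Real.cos t • p + Real.sin t • e) z) = fun _ => u p z := by
      funext t
      have hm : Real.cos t • p + Real.sin t • e ∈ Metric.sphere (0 : (EuclideanSpace ℝ (Fin (n+1)))) 1 := by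
        simpa using cdz_geo_norm p e hp1 he hpe t
      exact le_antisymm (cdz_const (by omega) hT hu z _ _ hm hp) (cdz_const (by omega) hT hu z _ _ hp hm)
    rw [h2] at h1
    have h3 := h1.unique (hasDerivAt_const 0 (u p z))
    simpa using h3
  have hTp : T p p = 0 := by ext V; simpa using hT.tangential p hp V
  have htan : ∀ e : (EuclideanSpace ℝ (Fin (n+1))), ⟪e, p⟫ = 0 → T p e = 0 := by
    intro e hpe
    by_cases he : e = 0
    · simp [he]
    have hne := norm_ne_zero_iff.2 he
    have h1 := hunit (‖e‖⁻¹ • e) (by simp [norm_smul, hne]) (by simp [inner_smul_left, hpe])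
    rw [map_smul] at h1
    exact (smul_eq_zero.1 h1).resolve_left (inv_ne_zero hne)
  ext1 v
  have hv : v = tanProj p v + ⟪v, p⟫ • p := by simp [tanProj]
  rw [hv, map_add, map_smul, hTp, htan _ (cdz_tanProj_orth p v hp1)]
  simp

end sphere

/- STATEMENT 7: A trace-free Codazzi tensor on the round unit sphere S^n(1) (n ≥ 2)
vanishes identically. Consequently, for an infinitesimal isometric deformation k of
S^n(1) ⊂ ℝ^{n+1} with k^T = 0, the linearized second fundamental form A'_k — which is
a trace-free Codazzi tensor — must vanish. -/
theorem stmt_7 (n : ℕ) (hn : 2 ≤ n) :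
    (∀ T : EuclideanSpace ℝ (Fin (n+1)) →
        EuclideanSpace ℝ (Fin (n+1)) →L[ℝ] EuclideanSpace ℝ (Fin (n+1)) →L[ℝ] ℝ,
      IsTraceFreeCodazziSphere T →
        ∀ p ∈ Metric.sphere (0 : EuclideanSpace ℝ (Fin (n+1))) 1, T p = 0) ∧
    (∀ A'k : EuclideanSpace ℝ (Fin (n+1)) →
        EuclideanSpace ℝ (Fin (n+1)) →L[ℝ] EuclideanSpace ℝ (Fin (n+1)) →L[ℝ] ℝ,
      -- A'_k : the linearized second fundamental form of a deformation k with
      -- k^T = 0 and H'_k = 0, which is a trace-free Codazzi tensor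
      IsTraceFreeCodazziSphere A'k →
        ∀ p ∈ Metric.sphere (0 : EuclideanSpace ℝ (Fin (n+1))) 1, A'k p = 0) := by
  exact ⟨fun T hT p hp => cdz_main hn hT p hp, fun T hT p hp => cdz_main hn hT p hp⟩
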